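/- Fix D ∈ ℍ^{m×n}, Ω ⊆ Fin m × Fin n, and λ > 0. Let Z^k = (A^k, B^k, X^k) satisfy the LRQD recurrences (X^k_{ij} = D_{ij} on Ω and = (A^k·B^k)_{ij} off Ω; A^{k+1} = (X^k·(B^k)ᴴ + λ·A^k)·(B^k·(B^k)ᴴ + λ·I)⁻¹; B^{k+1} = ((A^{k+1})ᴴ·A^{k+1} + λ·I)⁻¹·((A^{k+1})ᴴ·X^k + λ·B^k)), let f(A,B,X) = ½‖A·B − X‖_F², and assume {Z^k} is bounded. Assume further that for every limit point Z# of {Z^k} there exist θ ∈ [1/2, 1), μ > 0 and ρ > 0 such that |f(Z) − f(Z#)|^θ ≤ μ·G(Z) for every triple Z = (A,B,X) with X_{ij} = D_{ij} on Ω and ‖Z − Z#‖ ≤ ρ. Then ∑_{k=0}^∞ ‖Z^k − Z^{k+1}‖ < ∞; in particular the whole sequence {Z^k} converges to a limit. -/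

import Mathlib

open scoped Quaternion Matrix
open Filter

/-- The Frobenius norm of a quaternion matrix. -/
noncomputable def frob {m n : ℕ} (A : Matrix (Fin m) (Fin n) ℍ[ℝ]) : ℝ :=
  Real.sqrt (∑ i, ∑ j, ‖A i j‖ ^ 2)

/-- The norm of a triple (A, B, X). -/
noncomputable def tnorm {m r n : ℕ} (A : Matrix (Fin m) (Fin r) ℍ[ℝ])
    (B : Matrix (Fin r) (Fin n) ℍ[ℝ]) (X : Matrix (Fin m) (Fin n) ℍ[ℝ]) : ℝ :=
  Real.sqrt (frob A ^ 2 + frob B ^ 2 + frob X ^ 2)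

/-- The projected-gradient norm G(A,B,X). -/
noncomputable def pgnorm {m r n : ℕ} (Ω : Set (Fin m × Fin n)) [DecidablePred (· ∈ Ω)]
    (A : Matrix (Fin m) (Fin r) ℍ[ℝ]) (B : Matrix (Fin r) (Fin n) ℍ[ℝ])
    (X : Matrix (Fin m) (Fin n) ℍ[ℝ]) : ℝ :=
  Real.sqrt (frob ((A * B - X) * Bᴴ) ^ 2 + frob (Aᴴ * (A * B - X)) ^ 2 +
    ∑ p : Fin m × Fin n, if p ∈ Ω then 0 else ‖(X - A * B) p.1 p.2‖ ^ 2)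

/-!
Each ridge-regression update solves a normal equation `(A' B - X) Bᴴ = lam (A - A')`, respectively
`Aᴴ (A B' - X) = lam (B - B')`. Pairing it with the step shows that one full iteration lowers the
objective by at least `c ‖step‖²`; reading it as a formula for the partial gradients shows that the
projected gradient is at most `C ‖step‖` near any given point. Combined with these two estimates,
the Kurdyka–Łojasiewicz inequality bounds each step taken near a limit point `W` by a multiple of
the decrease of `(f - f W) ^ (1 - θ)`. These decreases telescope, so an orbit that comes close
enough to `W` stays near it and has finite length.
-/

open scoped Topology

section KurdykaLojasiewicz

/-- `d` is a step length and `s`, `t` are the objective gaps before and after the step. -/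
lemma mul_le_rpow_sub_rpow_of_sq_le_of_rpow_le {s t d c μ θ : ℝ} (hθ0 : 0 ≤ θ) (hθ1 : θ ≤ 1)
    (hc : 0 ≤ c) (hμ : 0 < μ) (ht : 0 ≤ t) (hdescent : c * d ^ 2 ≤ s - t)
    (hKL : s ^ θ ≤ μ * d) : (1 - θ) * c / μ * d ≤ s ^ (1 - θ) - t ^ (1 - θ) := by
  have hts : t ≤ s := by linarith [mul_nonneg hc (sq_nonneg d)]
  have hs : 0 ≤ s := ht.trans hts
  have hgap : 0 ≤ s ^ (1 - θ) - t ^ (1 - θ) :=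
    sub_nonneg.2 (Real.rpow_le_rpow ht hts (sub_nonneg.2 hθ1))
  have hd : 0 ≤ d := nonneg_of_mul_nonneg_right ((Real.rpow_nonneg hs θ).trans hKL) hμ
  rcases hd.eq_or_lt with rfl | hd
  · simpa only [mul_zero] using hgap
  -- Replaces the tangent inequality of `x ↦ x ^ (1 - θ)`, which would need `s ≠ 0`.
  have hyoung : s ^ θ * t ^ (1 - θ) ≤ θ * s + (1 - θ) * t :=
    Real.geom_mean_le_arith_mean2_weighted hθ0 (sub_nonneg.2 hθ1) hs ht (by ring)
  have hsplit : s ^ θ * s ^ (1 - θ) = s := by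
    rw [← Real.rpow_add_of_nonneg hs hθ0 (sub_nonneg.2 hθ1), add_sub_cancel, Real.rpow_one]
  have hchain : (1 - θ) * c * d * d ≤ μ * (s ^ (1 - θ) - t ^ (1 - θ)) * d :=
    calc (1 - θ) * c * d * d = (1 - θ) * (c * d ^ 2) := by ring
      _ ≤ (1 - θ) * (s - t) := mul_le_mul_of_nonneg_left hdescent (sub_nonneg.2 hθ1)
      _ ≤ s ^ θ * (s ^ (1 - θ) - t ^ (1 - θ)) := by linarith
      _ ≤ μ * d * (s ^ (1 - θ) - t ^ (1 - θ)) := mul_le_mul_of_nonneg_right hKL hgap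
      _ = μ * (s ^ (1 - θ) - t ^ (1 - θ)) * d := by ring
  rw [div_mul_eq_mul_div, div_le_iff₀' hμ]
  exact le_of_mul_le_mul_right hchain hd

variable {α : Type*} [PseudoMetricSpace α] {z : ℕ → α} {w : α}

lemma dist_add_le_of_dist_succ_le_sub {g : ℕ → ℝ} {ε : ℝ} (hg : ∀ k, 0 ≤ g k)
    (hstart : dist (z 0) w + g 0 < ε)
    (hstep : ∀ k, dist (z k) w < ε → dist (z k) (z (k + 1)) ≤ g k - g (k + 1)) (k : ℕ) :
    dist (z k) w + g k ≤ dist (z 0) w + g 0 := by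
  induction k with
  | zero => exact le_rfl
  | succ k ih =>
    have hball : dist (z k) w < ε := by linarith [hg k]
    linarith [hstep k hball, dist_triangle_left (z (k + 1)) w (z k)]

lemma summable_dist_of_dist_succ_le_sub {g : ℕ → ℝ} {ε : ℝ} (hg : ∀ k, 0 ≤ g k)
    (hstart : dist (z 0) w + g 0 < ε)
    (hstep : ∀ k, dist (z k) w < ε → dist (z k) (z (k + 1)) ≤ g k - g (k + 1)) :
    Summable fun k => dist (z k) (z (k + 1)) := by
  refine summable_of_sum_range_le (c := g 0) (fun _ => dist_nonneg) fun n => ?_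
  calc ∑ k ∈ Finset.range n, dist (z k) (z (k + 1))
      ≤ ∑ k ∈ Finset.range n, (g k - g (k + 1)) := Finset.sum_le_sum fun k _ =>
        hstep k (by linarith [hg k, dist_add_le_of_dist_succ_le_sub hg hstart hstep k])
    _ = g 0 - g n := Finset.sum_range_sub' g n
    _ ≤ g 0 := sub_le_self _ (hg n)

lemma tendsto_of_antitone_of_mapClusterPt {β : Type*} [TopologicalSpace β]
    [ConditionallyCompleteLinearOrder β] [OrderTopology β] [NoMinOrder β]
    [FirstCountableTopology β] {v : ℕ → β} {l : β} (hv : Antitone v)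
    (hl : MapClusterPt l atTop v) : Tendsto v atTop (𝓝 l) := by
  obtain ⟨φ, hφ, hlim⟩ := hl.tendsto_subseq
  exact (tendsto_iff_tendsto_subseq_of_antitone hv hφ.tendsto_atTop).2 hlim

theorem summable_dist_and_tendsto_of_descent_of_kl {f : α → ℝ} {c θ μ ρ : ℝ}
    (hf : ContinuousAt f w) (hw : MapClusterPt w atTop z) (hc : 0 < c)
    (hdescent : ∀ k, c * dist (z k) (z (k + 1)) ^ 2 ≤ f (z k) - f (z (k + 1)))
    (hθ0 : 0 ≤ θ) (hθ1 : θ < 1) (hμ : 0 < μ) (hρ : 0 < ρ)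
    (hKL : ∀ k, dist (z k) w ≤ ρ → |f (z k) - f w| ^ θ ≤ μ * dist (z k) (z (k + 1))) :
    (Summable fun k => dist (z k) (z (k + 1))) ∧ Tendsto z atTop (𝓝 w) := by
  have hanti : Antitone fun k => f (z k) := antitone_nat_of_succ_le fun k =>
    sub_nonneg.1 ((mul_nonneg hc.le (sq_nonneg _)).trans (hdescent k))
  have hlim : Tendsto (fun k => f (z k)) atTop (𝓝 (f w)) :=
    tendsto_of_antitone_of_mapClusterPt hanti (hw.continuousAt_comp hf)
  have hgap : ∀ k, 0 ≤ f (z k) - f w := fun k => sub_nonneg.2 (hanti.le_of_tendsto hlim k)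
  have hθ : 0 < 1 - θ := sub_pos.2 hθ1
  set K := (1 - θ) * c / μ
  have hK : 0 < K := by positivity
  set g : ℕ → ℝ := fun k => (f (z k) - f w) ^ (1 - θ) / K with hgdef
  have hg : ∀ k, 0 ≤ g k := fun k => div_nonneg (Real.rpow_nonneg (hgap k) _) hK.le
  have hg0 : Tendsto g atTop (𝓝 0) := by
    simpa [hgdef, Real.zero_rpow hθ.ne'] using
      ((hlim.sub_const (f w)).rpow_const (p := 1 - θ) (Or.inr hθ.le)).div_const K
  have hstep : ∀ k, dist (z k) w < ρ → dist (z k) (z (k + 1)) ≤ g k - g (k + 1) := by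
    intro k hk
    rw [← sub_div, le_div_iff₀' hK]
    refine mul_le_rpow_sub_rpow_of_sq_le_of_rpow_le hθ0 hθ1.le hc.le hμ (hgap (k + 1)) ?_ ?_
    · simpa only [sub_sub_sub_cancel_right] using hdescent k
    · simpa only [abs_of_nonneg (hgap k)] using hKL k hk.le
  obtain ⟨n, hnw, hng⟩ : ∃ n, dist (z n) w < ρ / 2 ∧ g n < ρ / 2 :=
    ((hw.frequently (Metric.ball_mem_nhds w (half_pos hρ))).and_eventually
      (hg0.eventually (gt_mem_nhds (half_pos hρ)))).exists
  have hsum : Summable fun k => dist (z k) (z (k + 1)) := by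
    refine (summable_nat_add_iff n).1 ?_
    simpa only [add_right_comm] using summable_dist_of_dist_succ_le_sub
      (z := fun k => z (k + n)) (w := w) (g := fun k => g (k + n)) (ε := ρ) (fun k => hg (k + n))
      (by simpa only [zero_add] using (add_lt_add hnw hng).trans_eq (add_halves ρ))
      fun k hk => by simpa only [add_right_comm] using hstep (k + n) hk
  exact ⟨hsum, le_nhds_of_cauchy_adhp (cauchySeq_of_summable_dist hsum) hw⟩

end KurdykaLojasiewicz

section FrobeniusInner

open scoped Matrix.Norms.Frobenius

variable {l m n : Type*} [Fintype l] [Fintype m] [Fintype n]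

lemma frobenius_norm_sq {E : Type*} [SeminormedAddCommGroup E] (A : Matrix m n E) :
    ‖A‖ ^ 2 = ∑ i, ∑ j, ‖A i j‖ ^ 2 := by
  rw [Matrix.frobenius_norm_def, ← Real.sqrt_eq_rpow, Real.sq_sqrt (by positivity)]
  simp only [Real.rpow_two]

lemma frobenius_norm_le_of_forall_norm_le {E F : Type*} [SeminormedAddCommGroup E]
    [SeminormedAddCommGroup F] {A : Matrix m n E} {B : Matrix m n F}
    (h : ∀ i j, ‖A i j‖ ≤ ‖B i j‖) : ‖A‖ ≤ ‖B‖ := by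
  refine le_of_sq_le_sq ?_ (norm_nonneg B)
  rw [frobenius_norm_sq, frobenius_norm_sq]
  gcongr with i _ j _
  exact h i j

lemma frobenius_norm_mul_le {R : Type*} [NonUnitalSeminormedRing R] (A : Matrix l m R)
    (B : Matrix m n R) : ‖A * B‖ ≤ ‖A‖ * ‖B‖ := by
  -- `Matrix.frobenius_norm_mul` is for `RCLike` entries: apply it to the matrices of entry norms.
  have hentry : ∀ i k, ‖(A * B) i k‖ ≤ ‖(A.map norm * B.map norm) i k‖ := fun i k => by
    simp only [Matrix.mul_apply, Matrix.map_apply]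
    exact (norm_sum_le_of_le _ fun j _ => norm_mul_le _ _).trans (Real.le_norm_self _)
  calc ‖A * B‖ ≤ ‖A.map norm * B.map norm‖ := frobenius_norm_le_of_forall_norm_le hentry
    _ ≤ ‖A.map norm‖ * ‖B.map norm‖ := Matrix.frobenius_norm_mul _ _
    _ = ‖A‖ * ‖B‖ := by
      rw [Matrix.frobenius_norm_map_eq A norm norm_norm,
        Matrix.frobenius_norm_map_eq B norm norm_norm]

/-- The entrywise (Frobenius) inner product on matrices, compatible with Mathlib's Frobenius norm;
not a global instance because that norm is not one either. -/
noncomputable abbrev frobeniusInnerProductSpace (𝕜 : Type*) {E : Type*} [RCLike 𝕜]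
    [NormedAddCommGroup E] [InnerProductSpace 𝕜 E] : InnerProductSpace 𝕜 (Matrix m n E) where
  inner U V := ∑ i, ∑ j, inner 𝕜 (U i j) (V i j)
  norm_sq_eq_re_inner U := by
    simp only [frobenius_norm_sq, map_sum, norm_sq_eq_re_inner (𝕜 := 𝕜)]
  conj_inner_symm U V := by simp only [map_sum, inner_conj_symm]
  add_left U V W := by simp only [Matrix.add_apply, inner_add_left, Finset.sum_add_distrib]
  smul_left U V c := by simp only [Matrix.smul_apply, inner_smul_left, Finset.mul_sum]

attribute [local instance] frobeniusInnerProductSpace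

lemma frobenius_inner_def {𝕜 E : Type*} [RCLike 𝕜] [NormedAddCommGroup E] [InnerProductSpace 𝕜 E]
    (U V : Matrix m n E) : inner 𝕜 U V = ∑ i, ∑ j, inner 𝕜 (U i j) (V i j) := rfl

lemma quaternion_inner_mul_left (a b c : ℍ[ℝ]) : inner ℝ (a * b) c = inner ℝ b (star a * c) := by
  have re_mul_comm (p q : ℍ[ℝ]) : (p * q).re = (q * p).re := by
    rw [Quaternion.re_mul, Quaternion.re_mul]
    ring
  rw [Quaternion.inner_def, Quaternion.inner_def, star_mul, star_star, mul_assoc, re_mul_comm,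
    mul_assoc]

lemma quaternion_inner_mul_right (a b c : ℍ[ℝ]) : inner ℝ (a * b) c = inner ℝ a (c * star b) := by
  rw [Quaternion.inner_def, Quaternion.inner_def, star_mul, star_star, mul_assoc]

lemma frobenius_inner_mul_left (A : Matrix l m ℍ[ℝ]) (U : Matrix m n ℍ[ℝ])
    (W : Matrix l n ℍ[ℝ]) : inner ℝ (A * U) W = inner ℝ U (Aᴴ * W) := by
  simp only [frobenius_inner_def, Matrix.mul_apply, sum_inner, inner_sum,
    Matrix.conjTranspose_apply, quaternion_inner_mul_left]
  calc _ = ∑ i, ∑ k, ∑ j, inner ℝ (U k j) (star (A i k) * W i j) :=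
        Finset.sum_congr rfl fun _ _ => Finset.sum_comm
    _ = ∑ k, ∑ i, ∑ j, inner ℝ (U k j) (star (A i k) * W i j) := Finset.sum_comm
    _ = _ := Finset.sum_congr rfl fun _ _ => Finset.sum_comm

lemma frobenius_inner_mul_right (U : Matrix l m ℍ[ℝ]) (B : Matrix m n ℍ[ℝ])
    (W : Matrix l n ℍ[ℝ]) : inner ℝ (U * B) W = inner ℝ U (W * Bᴴ) := by
  simp only [frobenius_inner_def, Matrix.mul_apply, sum_inner, inner_sum,
    Matrix.conjTranspose_apply, quaternion_inner_mul_right]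
  exact Finset.sum_congr rfl fun _ _ => Finset.sum_comm

lemma isUnit_mul_conjTranspose_add_smul_one [DecidableEq m] (B : Matrix m n ℍ[ℝ]) {lam : ℝ}
    (hlam : 0 < lam) : IsUnit (B * Bᴴ + lam • (1 : Matrix m m ℍ[ℝ])) := by
  rw [IsArtinianRing.isUnit_iff_isRightRegular, isRightRegular_iff_mem_nonZeroDivisorsRight]
  intro C hC
  have henergy : ‖C * B‖ ^ 2 + lam * ‖C‖ ^ 2 = 0 :=
    calc ‖C * B‖ ^ 2 + lam * ‖C‖ ^ 2
        = inner ℝ C (C * (B * Bᴴ + lam • (1 : Matrix m m ℍ[ℝ]))) := by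
          rw [Matrix.mul_add, Matrix.mul_smul, Matrix.mul_one, ← Matrix.mul_assoc, inner_add_right,
            ← frobenius_inner_mul_right, real_inner_smul_right, real_inner_self_eq_norm_sq,
            real_inner_self_eq_norm_sq]
      _ = 0 := by rw [hC, inner_zero_right]
  have hzero : lam * ‖C‖ ^ 2 = 0 := by
    nlinarith [sq_nonneg ‖C * B‖, mul_nonneg hlam.le (sq_nonneg ‖C‖)]
  simpa [hlam.ne'] using hzero

lemma norm_sq_add_two_mul_le_of_inner_eq {E F : Type*} [NormedAddCommGroup E]
    [InnerProductSpace ℝ E] [SeminormedAddCommGroup F] {x y : E} {δ : F} {lam : ℝ}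
    (h : inner ℝ x y = lam * ‖δ‖ ^ 2) : ‖y‖ ^ 2 + 2 * lam * ‖δ‖ ^ 2 ≤ ‖x + y‖ ^ 2 := by
  rw [norm_add_sq_real, h]
  linarith [sq_nonneg ‖x‖]

end FrobeniusInner

/-- The space of triples `(A, B, X)`. `WithLp 2` makes the product of the Frobenius norms
Euclidean. -/
abbrev FactorTriple (m r n : Type*) : Type _ :=
  WithLp 2 (Matrix m r ℍ[ℝ] × WithLp 2 (Matrix r n ℍ[ℝ] × Matrix m n ℍ[ℝ]))

namespace FactorTriple

variable {m r n : Type*}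

/-- The triple with the given three components. -/
abbrev mk (A : Matrix m r ℍ[ℝ]) (B : Matrix r n ℍ[ℝ]) (X : Matrix m n ℍ[ℝ]) :
    FactorTriple m r n :=
  WithLp.toLp 2 (A, WithLp.toLp 2 (B, X))

/-- The left factor `A` of `(A, B, X)`. -/
abbrev A (Z : FactorTriple m r n) : Matrix m r ℍ[ℝ] := Z.fst

/-- The right factor `B` of `(A, B, X)`. -/
abbrev B (Z : FactorTriple m r n) : Matrix r n ℍ[ℝ] := Z.snd.fst

/-- The completed matrix `X` of `(A, B, X)`. -/
abbrev X (Z : FactorTriple m r n) : Matrix m n ℍ[ℝ] := Z.snd.snd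

end FactorTriple

/-- The LRQD recurrences: ridge-regression updates of the two factors, after which the entries of
`X` outside the set `Ω` of observed entries of `D` are refilled from `A * B`. -/
structure IsLRQDIteration {m r n : Type*} [Fintype m] [Fintype r] [Fintype n] [DecidableEq r]
    (D : Matrix m n ℍ[ℝ]) (Ω : Set (m × n)) (lam : ℝ) (Z : ℕ → FactorTriple m r n) : Prop where
  X_eq_data : ∀ k, ∀ p ∈ Ω, (Z k).X p.1 p.2 = D p.1 p.2
  X_eq_mul : ∀ k, ∀ p ∉ Ω, (Z k).X p.1 p.2 = ((Z k).A * (Z k).B) p.1 p.2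
  A_succ : ∀ k, (Z (k + 1)).A = ((Z k).X * (Z k).Bᴴ + lam • (Z k).A) *
    Ring.inverse ((Z k).B * (Z k).Bᴴ + lam • (1 : Matrix r r ℍ[ℝ]))
  B_succ : ∀ k, (Z (k + 1)).B =
    Ring.inverse ((Z (k + 1)).Aᴴ * (Z (k + 1)).A + lam • (1 : Matrix r r ℍ[ℝ])) *
      ((Z (k + 1)).Aᴴ * (Z k).X + lam • (Z k).B)

section LRQD

open scoped Matrix.Norms.Frobenius

attribute [local instance] frobeniusInnerProductSpace

variable {m r n : Type*} [Fintype m] [Fintype r] [Fintype n]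

namespace FactorTriple

lemma norm_sq (Z : FactorTriple m r n) : ‖Z‖ ^ 2 = ‖Z.A‖ ^ 2 + ‖Z.B‖ ^ 2 + ‖Z.X‖ ^ 2 := by
  rw [WithLp.prod_norm_sq_eq_of_L2, WithLp.prod_norm_sq_eq_of_L2, ← add_assoc]

lemma dist_sq (Z W : FactorTriple m r n) :
    dist Z W ^ 2 = ‖Z.A - W.A‖ ^ 2 + ‖Z.B - W.B‖ ^ 2 + ‖Z.X - W.X‖ ^ 2 := by
  rw [dist_eq_norm, norm_sq]
  rfl

lemma norm_A_le (Z : FactorTriple m r n) : ‖Z.A‖ ≤ ‖Z‖ := WithLp.norm_fst_le _ Z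

lemma norm_B_le (Z : FactorTriple m r n) : ‖Z.B‖ ≤ ‖Z‖ :=
  (WithLp.norm_fst_le _ Z.snd).trans (WithLp.norm_snd_le _ Z)

lemma norm_X_le (Z : FactorTriple m r n) : ‖Z.X‖ ≤ ‖Z‖ :=
  (WithLp.norm_snd_le _ Z.snd).trans (WithLp.norm_snd_le _ Z)

lemma norm_le_add (Z : FactorTriple m r n) : ‖Z‖ ≤ ‖Z.A‖ + ‖Z.B‖ + ‖Z.X‖ := by
  refine le_of_sq_le_sq ?_ (by positivity)
  rw [norm_sq]
  nlinarith [mul_nonneg (norm_nonneg Z.A) (norm_nonneg Z.B),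
    mul_nonneg (add_nonneg (norm_nonneg Z.A) (norm_nonneg Z.B)) (norm_nonneg Z.X)]

/-- The LRQD objective `f(A, B, X) = ‖A B - X‖² / 2`. -/
noncomputable def objective (Z : FactorTriple m r n) : ℝ := 1 / 2 * ‖Z.A * Z.B - Z.X‖ ^ 2

lemma continuous_objective : Continuous (objective : FactorTriple m r n → ℝ) := by
  unfold objective
  fun_prop

/-- The gradient of `FactorTriple.objective`, projected onto the directions that keep the entries
of `X` in `Ω` fixed. -/
noncomputable def projGrad (Ω : Set (m × n)) (Z : FactorTriple m r n) : FactorTriple m r n :=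
  mk ((Z.A * Z.B - Z.X) * Z.Bᴴ) (Z.Aᴴ * (Z.A * Z.B - Z.X))
    (Matrix.of fun i j => Ωᶜ.indicator (fun p => (Z.X - Z.A * Z.B) p.1 p.2) (i, j))

lemma projGrad_X_apply (Ω : Set (m × n)) (Z : FactorTriple m r n) (i : m) (j : n) :
    (projGrad Ω Z).X i j = Ωᶜ.indicator (fun p => (Z.X - Z.A * Z.B) p.1 p.2) (i, j) := rfl

end FactorTriple

lemma norm_sq_add_le_of_left_normal_eq {A A' : Matrix m r ℍ[ℝ]} {B : Matrix r n ℍ[ℝ]}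
    {X : Matrix m n ℍ[ℝ]} {lam : ℝ} (h : (A' * B - X) * Bᴴ = lam • (A - A')) :
    ‖A' * B - X‖ ^ 2 + 2 * lam * ‖A - A'‖ ^ 2 ≤ ‖A * B - X‖ ^ 2 := by
  have hsplit : A * B - X = (A - A') * B + (A' * B - X) := by
    rw [Matrix.sub_mul, sub_add_sub_cancel]
  rw [hsplit]
  refine norm_sq_add_two_mul_le_of_inner_eq ?_
  rw [frobenius_inner_mul_right, h, real_inner_smul_right, real_inner_self_eq_norm_sq]

lemma norm_sq_add_le_of_right_normal_eq {A : Matrix m r ℍ[ℝ]} {B B' : Matrix r n ℍ[ℝ]}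
    {X : Matrix m n ℍ[ℝ]} {lam : ℝ} (h : Aᴴ * (A * B' - X) = lam • (B - B')) :
    ‖A * B' - X‖ ^ 2 + 2 * lam * ‖B - B'‖ ^ 2 ≤ ‖A * B - X‖ ^ 2 := by
  have hsplit : A * B - X = A * (B - B') + (A * B' - X) := by
    rw [Matrix.mul_sub, sub_add_sub_cancel]
  rw [hsplit]
  refine norm_sq_add_two_mul_le_of_inner_eq ?_
  rw [frobenius_inner_mul_left, h, real_inner_smul_right, real_inner_self_eq_norm_sq]

lemma norm_sub_sq_add_norm_sub_sq_of_eqOn {E : Type*} [SeminormedAddCommGroup E] {Ω : Set (m × n)}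
    {Q X X' : Matrix m n E} (hin : ∀ p ∈ Ω, X p.1 p.2 = X' p.1 p.2)
    (hout : ∀ p ∉ Ω, X' p.1 p.2 = Q p.1 p.2) :
    ‖Q - X'‖ ^ 2 + ‖X - X'‖ ^ 2 = ‖Q - X‖ ^ 2 := by
  simp only [frobenius_norm_sq, ← Finset.sum_add_distrib, Matrix.sub_apply]
  refine Finset.sum_congr rfl fun i _ => Finset.sum_congr rfl fun j _ => ?_
  by_cases hp : (i, j) ∈ Ω
  · simp [hin (i, j) hp]
  · simp [hout (i, j) hp, norm_sub_rev (X i j)]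

lemma norm_residual_mul_conjTranspose_le {A A' : Matrix m r ℍ[ℝ]} {B : Matrix r n ℍ[ℝ]}
    {X : Matrix m n ℍ[ℝ]} {lam : ℝ} (hlam : 0 ≤ lam)
    (h : (A' * B - X) * Bᴴ = lam • (A - A')) :
    ‖(A * B - X) * Bᴴ‖ ≤ (lam + ‖B‖ ^ 2) * ‖A - A'‖ := by
  have hsplit : (A * B - X) * Bᴴ = lam • (A - A') + (A - A') * B * Bᴴ := by
    rw [← h, ← Matrix.add_mul, Matrix.sub_mul A, sub_add_sub_cancel']
  calc ‖(A * B - X) * Bᴴ‖ ≤ ‖lam • (A - A')‖ + ‖(A - A') * B * Bᴴ‖ :=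
        hsplit ▸ norm_add_le _ _
    _ ≤ lam * ‖A - A'‖ + ‖A - A'‖ * ‖B‖ * ‖B‖ := by
        gcongr
        · rw [norm_smul, Real.norm_of_nonneg hlam]
        · grw [frobenius_norm_mul_le, frobenius_norm_mul_le, Matrix.frobenius_norm_conjTranspose]
    _ = (lam + ‖B‖ ^ 2) * ‖A - A'‖ := by ring

lemma norm_conjTranspose_mul_residual_le {A A' : Matrix m r ℍ[ℝ]} {B B' : Matrix r n ℍ[ℝ]}
    {X : Matrix m n ℍ[ℝ]} {lam : ℝ} (hlam : 0 ≤ lam)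
    (h : A'ᴴ * (A' * B' - X) = lam • (B - B')) :
    ‖Aᴴ * (A * B - X)‖ ≤
      (‖A * B - X‖ + ‖A'‖ * ‖B‖) * ‖A - A'‖ + (lam + ‖A'‖ ^ 2) * ‖B - B'‖ := by
  have hsplit : Aᴴ * (A * B - X) = (A - A')ᴴ * (A * B - X) +
      (A'ᴴ * ((A - A') * B) + (A'ᴴ * (A' * (B - B')) + lam • (B - B'))) := by
    rw [← h, Matrix.conjTranspose_sub]
    simp only [Matrix.sub_mul, Matrix.mul_sub]
    abel
  calc ‖Aᴴ * (A * B - X)‖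
      ≤ ‖(A - A')ᴴ * (A * B - X)‖ + (‖A'ᴴ * ((A - A') * B)‖ +
          (‖A'ᴴ * (A' * (B - B'))‖ + ‖lam • (B - B')‖)) := by
        rw [hsplit]
        grw [norm_add_le, norm_add_le, norm_add_le]
    _ ≤ ‖A - A'‖ * ‖A * B - X‖ + (‖A'‖ * (‖A - A'‖ * ‖B‖) +
          (‖A'‖ * (‖A'‖ * ‖B - B'‖) + lam * ‖B - B'‖)) := by
        grw [frobenius_norm_mul_le, frobenius_norm_mul_le, frobenius_norm_mul_le,
          frobenius_norm_mul_le, frobenius_norm_mul_le]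
        simp only [Matrix.frobenius_norm_conjTranspose, norm_smul, Real.norm_of_nonneg hlam,
          le_refl]
    _ = _ := by ring

open FactorTriple

namespace IsLRQDIteration

variable [DecidableEq r] {D : Matrix m n ℍ[ℝ]} {Ω : Set (m × n)} {lam : ℝ}
  {Z : ℕ → FactorTriple m r n}

lemma A_normal_eq (hZ : IsLRQDIteration D Ω lam Z) (hlam : 0 < lam) (k : ℕ) :
    ((Z (k + 1)).A * (Z k).B - (Z k).X) * (Z k).Bᴴ = lam • ((Z k).A - (Z (k + 1)).A) := by
  have hmul : (Z (k + 1)).A * ((Z k).B * (Z k).Bᴴ + lam • (1 : Matrix r r ℍ[ℝ])) =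
      (Z k).X * (Z k).Bᴴ + lam • (Z k).A := by
    rw [hZ.A_succ, Matrix.mul_assoc,
      Ring.inverse_mul_cancel _ (isUnit_mul_conjTranspose_add_smul_one (Z k).B hlam),
      Matrix.mul_one]
  rw [Matrix.mul_add, Matrix.mul_smul, Matrix.mul_one, ← Matrix.mul_assoc] at hmul
  rw [Matrix.sub_mul, smul_sub, sub_eq_sub_iff_add_eq_add, hmul, add_comm]

lemma B_normal_eq (hZ : IsLRQDIteration D Ω lam Z) (hlam : 0 < lam) (k : ℕ) :
    (Z (k + 1)).Aᴴ * ((Z (k + 1)).A * (Z (k + 1)).B - (Z k).X) =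
      lam • ((Z k).B - (Z (k + 1)).B) := by
  have hunit : IsUnit ((Z (k + 1)).Aᴴ * (Z (k + 1)).A + lam • (1 : Matrix r r ℍ[ℝ])) := by
    simpa only [Matrix.conjTranspose_conjTranspose] using
      isUnit_mul_conjTranspose_add_smul_one (Z (k + 1)).Aᴴ hlam
  have hmul : ((Z (k + 1)).Aᴴ * (Z (k + 1)).A + lam • (1 : Matrix r r ℍ[ℝ])) * (Z (k + 1)).B =
      (Z (k + 1)).Aᴴ * (Z k).X + lam • (Z k).B := by
    rw [hZ.B_succ, ← Matrix.mul_assoc, Ring.mul_inverse_cancel _ hunit, Matrix.one_mul]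
  rw [Matrix.add_mul, Matrix.smul_mul, Matrix.one_mul, Matrix.mul_assoc] at hmul
  rw [Matrix.mul_sub, smul_sub, sub_eq_sub_iff_add_eq_add, hmul, add_comm]

lemma objective_descent (hZ : IsLRQDIteration D Ω lam Z) (hlam : 0 < lam) (k : ℕ) :
    min lam (1 / 2) * dist (Z k) (Z (k + 1)) ^ 2 ≤
      (Z k).objective - (Z (k + 1)).objective := by
  have hA := norm_sq_add_le_of_left_normal_eq (hZ.A_normal_eq hlam k)
  have hB := norm_sq_add_le_of_right_normal_eq (hZ.B_normal_eq hlam k)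
  have hX := norm_sub_sq_add_norm_sub_sq_of_eqOn
    (fun p hp => (hZ.X_eq_data k p hp).trans (hZ.X_eq_data (k + 1) p hp).symm)
    (hZ.X_eq_mul (k + 1))
  simp only [dist_sq, objective, mul_add]
  calc min lam (1 / 2) * ‖(Z k).A - (Z (k + 1)).A‖ ^ 2 +
        min lam (1 / 2) * ‖(Z k).B - (Z (k + 1)).B‖ ^ 2 +
        min lam (1 / 2) * ‖(Z k).X - (Z (k + 1)).X‖ ^ 2
      ≤ lam * ‖(Z k).A - (Z (k + 1)).A‖ ^ 2 + lam * ‖(Z k).B - (Z (k + 1)).B‖ ^ 2 +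
        1 / 2 * ‖(Z k).X - (Z (k + 1)).X‖ ^ 2 := by
        gcongr
        exacts [min_le_left _ _, min_le_left _ _, min_le_right _ _]
    _ ≤ 1 / 2 * ‖(Z k).A * (Z k).B - (Z k).X‖ ^ 2 -
        1 / 2 * ‖(Z (k + 1)).A * (Z (k + 1)).B - (Z (k + 1)).X‖ ^ 2 := by linarith

lemma dist_succ_le_sqrt (hZ : IsLRQDIteration D Ω lam Z) (hlam : 0 < lam) (k : ℕ) :
    dist (Z k) (Z (k + 1)) ≤ √((Z 0).objective / min lam (1 / 2)) := by
  have hc : 0 < min lam (1 / 2) := lt_min hlam one_half_pos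
  have hanti : Antitone fun k => (Z k).objective := antitone_nat_of_succ_le fun k =>
    sub_nonneg.1 ((mul_nonneg hc.le (sq_nonneg _)).trans (hZ.objective_descent hlam k))
  have hnonneg : 0 ≤ (Z (k + 1)).objective := mul_nonneg one_half_pos.le (sq_nonneg _)
  refine Real.le_sqrt_of_sq_le ((le_div_iff₀' hc).2 ?_)
  linarith [hZ.objective_descent hlam k, hanti (Nat.zero_le k)]

lemma projGrad_X_eq_zero (hZ : IsLRQDIteration D Ω lam Z) (k : ℕ) :
    (projGrad Ω (Z k)).X = 0 := by
  ext1 i j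
  simpa [projGrad_X_apply, sub_eq_zero] using hZ.X_eq_mul k (i, j)

lemma norm_projGrad_le (hZ : IsLRQDIteration D Ω lam Z) (hlam : 0 < lam) {k : ℕ} {M : ℝ}
    (hM : ‖Z k‖ ≤ M) (hM' : ‖Z (k + 1)‖ ≤ M) :
    ‖projGrad Ω (Z k)‖ ≤ (2 * lam + 4 * M ^ 2 + M) * dist (Z k) (Z (k + 1)) := by
  have hM0 : 0 ≤ M := (norm_nonneg _).trans hM
  have hA : ‖(Z k).A‖ ≤ M := (norm_A_le _).trans hM
  have hB : ‖(Z k).B‖ ≤ M := (norm_B_le _).trans hM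
  have hX : ‖(Z k).X‖ ≤ M := (norm_X_le _).trans hM
  have hA' : ‖(Z (k + 1)).A‖ ≤ M := (norm_A_le _).trans hM'
  have hdA : ‖(Z k).A - (Z (k + 1)).A‖ ≤ dist (Z k) (Z (k + 1)) :=
    (norm_A_le (Z k - Z (k + 1))).trans_eq (dist_eq_norm _ _).symm
  have hdB : ‖(Z k).B - (Z (k + 1)).B‖ ≤ dist (Z k) (Z (k + 1)) :=
    (norm_B_le (Z k - Z (k + 1))).trans_eq (dist_eq_norm _ _).symm
  have hres : ‖(Z k).A * (Z k).B - (Z k).X‖ ≤ M * M + M := by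
    grw [norm_sub_le, frobenius_norm_mul_le, hA, hB, hX]
  have hgradA : ‖(projGrad Ω (Z k)).A‖ ≤ (lam + M ^ 2) * dist (Z k) (Z (k + 1)) := by
    grw [← hdA, ← hB]
    exact norm_residual_mul_conjTranspose_le hlam.le (hZ.A_normal_eq hlam k)
  have hgradB : ‖(projGrad Ω (Z k)).B‖ ≤
      (M * M + M + M * M) * dist (Z k) (Z (k + 1)) + (lam + M ^ 2) * dist (Z k) (Z (k + 1)) := by
    grw [show ‖(projGrad Ω (Z k)).B‖ ≤ _ from
      norm_conjTranspose_mul_residual_le hlam.le (hZ.B_normal_eq hlam k), hres, hA', hB, hdA, hdB]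
  calc ‖projGrad Ω (Z k)‖
      ≤ ‖(projGrad Ω (Z k)).A‖ + ‖(projGrad Ω (Z k)).B‖ := by
        simpa only [hZ.projGrad_X_eq_zero, norm_zero, add_zero] using norm_le_add (projGrad Ω (Z k))
    _ ≤ (2 * lam + 4 * M ^ 2 + M) * dist (Z k) (Z (k + 1)) := by linarith

lemma exists_norm_projGrad_le_of_dist_le (hZ : IsLRQDIteration D Ω lam Z) (hlam : 0 < lam)
    (W : FactorTriple m r n) (ρ : ℝ) :
    ∃ C > 0, ∀ k, dist (Z k) W ≤ ρ → ‖projGrad Ω (Z k)‖ ≤ C * dist (Z k) (Z (k + 1)) := by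
  set S := √((Z 0).objective / min lam (1 / 2))
  set M := ‖W‖ + |ρ| + S
  refine ⟨2 * lam + 4 * M ^ 2 + M, by positivity, fun k hk => ?_⟩
  have hnear : ‖Z k‖ ≤ ‖W‖ + |ρ| := by
    grw [norm_le_norm_add_norm_sub' (Z k) W, ← dist_eq_norm, hk, ← le_abs_self ρ]
  refine hZ.norm_projGrad_le hlam (hnear.trans (le_add_of_nonneg_right (Real.sqrt_nonneg _))) ?_
  grw [norm_le_norm_add_norm_sub (Z k) (Z (k + 1)), ← dist_eq_norm, hnear,
    hZ.dist_succ_le_sqrt hlam k]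

end IsLRQDIteration

theorem LRQD_global_convergence_general [DecidableEq r] {D : Matrix m n ℍ[ℝ]} {Ω : Set (m × n)}
    {lam : ℝ} (hlam : 0 < lam) {Z : ℕ → FactorTriple m r n} (hZ : IsLRQDIteration D Ω lam Z)
    {W : FactorTriple m r n} (hW : MapClusterPt W atTop Z) {θ μ ρ : ℝ} (hθ0 : 0 ≤ θ) (hθ1 : θ < 1)
    (hμ : 0 < μ) (hρ : 0 < ρ)
    (hKL : ∀ Y : FactorTriple m r n, (∀ p ∈ Ω, Y.X p.1 p.2 = D p.1 p.2) → dist Y W ≤ ρ →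
      |Y.objective - W.objective| ^ θ ≤ μ * ‖projGrad Ω Y‖) :
    (Summable fun k => dist (Z k) (Z (k + 1))) ∧ Tendsto Z atTop (𝓝 W) := by
  obtain ⟨C, hC, hgrad⟩ := hZ.exists_norm_projGrad_le_of_dist_le hlam W ρ
  refine summable_dist_and_tendsto_of_descent_of_kl continuous_objective.continuousAt hW
    (lt_min hlam one_half_pos) (hZ.objective_descent hlam) hθ0 hθ1 (mul_pos hμ hC) hρ
    fun k hk => ?_
  grw [hKL (Z k) (hZ.X_eq_data k) hk, hgrad k hk, mul_assoc]

lemma frob_eq_norm {m n : ℕ} (A : Matrix (Fin m) (Fin n) ℍ[ℝ]) : frob A = ‖A‖ := by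
  rw [frob, ← frobenius_norm_sq, Real.sqrt_sq (norm_nonneg A)]

lemma norm_eq_tnorm {m r n : ℕ} (Z : FactorTriple (Fin m) (Fin r) (Fin n)) :
    ‖Z‖ = tnorm Z.A Z.B Z.X := by
  simp only [tnorm, frob_eq_norm, ← norm_sq, Real.sqrt_sq (norm_nonneg Z)]

lemma dist_eq_tnorm {m r n : ℕ} (Z W : FactorTriple (Fin m) (Fin r) (Fin n)) :
    dist Z W = tnorm (Z.A - W.A) (Z.B - W.B) (Z.X - W.X) := by
  rw [dist_eq_norm, norm_eq_tnorm]
  rfl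

lemma tendsto_iff_tnorm_sub_tendsto_zero {m r n : ℕ} {ι : Type*} {l : Filter ι}
    {u : ι → FactorTriple (Fin m) (Fin r) (Fin n)} {W : FactorTriple (Fin m) (Fin r) (Fin n)} :
    Tendsto u l (𝓝 W) ↔
      Tendsto (fun i => tnorm ((u i).A - W.A) ((u i).B - W.B) ((u i).X - W.X)) l (𝓝 0) := by
  have hdist : (fun i => dist (u i) W) =
      fun i => tnorm ((u i).A - W.A) ((u i).B - W.B) ((u i).X - W.X) :=
    funext fun i => dist_eq_tnorm (u i) W
  exact hdist ▸ tendsto_iff_dist_tendsto_zero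

lemma objective_eq_frob {m r n : ℕ} (Z : FactorTriple (Fin m) (Fin r) (Fin n)) :
    Z.objective = 1 / 2 * frob (Z.A * Z.B - Z.X) ^ 2 := by
  rw [objective, frob_eq_norm]

lemma norm_projGrad_eq_pgnorm {m r n : ℕ} (Ω : Set (Fin m × Fin n)) [DecidablePred (· ∈ Ω)]
    (Z : FactorTriple (Fin m) (Fin r) (Fin n)) : ‖projGrad Ω Z‖ = pgnorm Ω Z.A Z.B Z.X := by
  have hX : frob (projGrad Ω Z).X ^ 2 =
      ∑ p : Fin m × Fin n, if p ∈ Ω then 0 else ‖(Z.X - Z.A * Z.B) p.1 p.2‖ ^ 2 := by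
    rw [frob_eq_norm, frobenius_norm_sq, ← Fintype.sum_prod_type']
    refine Finset.sum_congr rfl fun p _ => ?_
    by_cases hp : p ∈ Ω <;> simp [projGrad_X_apply, hp]
  rw [norm_eq_tnorm, tnorm, hX]
  rfl

lemma exists_tendsto_subseq_of_frob_le {m r n : ℕ}
    {Z : ℕ → FactorTriple (Fin m) (Fin r) (Fin n)}
    (hZ : ∃ M, ∀ k, frob (Z k).A ≤ M ∧ frob (Z k).B ≤ M ∧ frob (Z k).X ≤ M) :
    ∃ W, ∃ φ : ℕ → ℕ, StrictMono φ ∧ Tendsto (Z ∘ φ) atTop (𝓝 W) := by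
  obtain ⟨M, hM⟩ := hZ
  simp only [frob_eq_norm] at hM
  have hbounded : Bornology.IsBounded (Set.range Z) := by
    refine (isBounded_iff_forall_norm_le).2 ⟨M + M + M, Set.forall_mem_range.2 fun k => ?_⟩
    grw [norm_le_add, (hM k).1, (hM k).2.1, (hM k).2.2]
  obtain ⟨W, -, φ, hφ, hlim⟩ := tendsto_subseq_of_bounded hbounded Set.mem_range_self
  exact ⟨W, φ, hφ, hlim⟩

end LRQD

/-- A bounded LRQD sequence satisfying the Kurdyka–Łojasiewicz inequality near each
of its limit points has finite length, hence converges. -/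
theorem LRQD_global_convergence {m r n : ℕ}
    (D : Matrix (Fin m) (Fin n) ℍ[ℝ]) (Ω : Set (Fin m × Fin n)) [DecidablePred (· ∈ Ω)]
    (lam : ℝ) (hlam : 0 < lam)
    (A : ℕ → Matrix (Fin m) (Fin r) ℍ[ℝ]) (B : ℕ → Matrix (Fin r) (Fin n) ℍ[ℝ])
    (X : ℕ → Matrix (Fin m) (Fin n) ℍ[ℝ])
    (hXin : ∀ k, ∀ p ∈ Ω, X k p.1 p.2 = D p.1 p.2)
    (hXout : ∀ k, ∀ p : Fin m × Fin n, p ∉ Ω → X k p.1 p.2 = (A k * B k) p.1 p.2)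
    (hA : ∀ k, A (k + 1) = (X k * (B k)ᴴ + lam • A k) *
      Ring.inverse (B k * (B k)ᴴ + lam • (1 : Matrix (Fin r) (Fin r) ℍ[ℝ])))
    (hB : ∀ k, B (k + 1) =
      Ring.inverse ((A (k + 1))ᴴ * A (k + 1) + lam • (1 : Matrix (Fin r) (Fin r) ℍ[ℝ])) *
      ((A (k + 1))ᴴ * X k + lam • B k))
    (hbdd : ∃ M : ℝ, ∀ k, frob (A k) ≤ M ∧ frob (B k) ≤ M ∧ frob (X k) ≤ M)
    (hKL : ∀ (Asharp : Matrix (Fin m) (Fin r) ℍ[ℝ]) (Bsharp : Matrix (Fin r) (Fin n) ℍ[ℝ])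
      (Xsharp : Matrix (Fin m) (Fin n) ℍ[ℝ]),
      (∃ φ : ℕ → ℕ, StrictMono φ ∧
        Tendsto (fun i => tnorm (A (φ i) - Asharp) (B (φ i) - Bsharp) (X (φ i) - Xsharp))
          atTop (nhds 0)) →
      ∃ θ μ ρ : ℝ, (1 / 2 ≤ θ ∧ θ < 1) ∧ 0 < μ ∧ 0 < ρ ∧
        ∀ (A' : Matrix (Fin m) (Fin r) ℍ[ℝ]) (B' : Matrix (Fin r) (Fin n) ℍ[ℝ])
          (X' : Matrix (Fin m) (Fin n) ℍ[ℝ]), (∀ p ∈ Ω, X' p.1 p.2 = D p.1 p.2) →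
          tnorm (A' - Asharp) (B' - Bsharp) (X' - Xsharp) ≤ ρ →
          |(1 / 2) * frob (A' * B' - X') ^ 2 -
            (1 / 2) * frob (Asharp * Bsharp - Xsharp) ^ 2| ^ θ ≤ μ * pgnorm Ω A' B' X') :
    Summable (fun k => tnorm (A k - A (k + 1)) (B k - B (k + 1)) (X k - X (k + 1))) ∧
    ∃ (Alim : Matrix (Fin m) (Fin r) ℍ[ℝ]) (Blim : Matrix (Fin r) (Fin n) ℍ[ℝ])
      (Xlim : Matrix (Fin m) (Fin n) ℍ[ℝ]),
      Tendsto (fun k => tnorm (A k - Alim) (B k - Blim) (X k - Xlim)) atTop (nhds 0) := by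
  let Z : ℕ → FactorTriple (Fin m) (Fin r) (Fin n) := fun k => .mk (A k) (B k) (X k)
  have hZ : IsLRQDIteration D Ω lam Z := ⟨hXin, hXout, hA, hB⟩
  obtain ⟨W, φ, hφ, hlim⟩ := exists_tendsto_subseq_of_frob_le (Z := Z) hbdd
  have hlim_tnorm := tendsto_iff_tnorm_sub_tendsto_zero.1 hlim
  obtain ⟨θ, μ, ρ, ⟨hθ, hθ1⟩, hμ, hρ, hKLW⟩ := hKL W.A W.B W.X ⟨φ, hφ, hlim_tnorm⟩
  obtain ⟨hsum, hconv⟩ := LRQD_global_convergence_general hlam hZ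
    (hlim.mapClusterPt.of_comp hφ.tendsto_atTop) (one_half_pos.le.trans hθ) hθ1 hμ hρ
    fun Y hY hYW => by
      rw [objective_eq_frob, objective_eq_frob, norm_projGrad_eq_pgnorm]
      exact hKLW Y.A Y.B Y.X hY ((dist_eq_tnorm Y W).symm.trans_le hYW)
  have hconv_tnorm := tendsto_iff_tnorm_sub_tendsto_zero.1 hconv
  exact ⟨hsum.congr fun k => dist_eq_tnorm (Z k) (Z (k + 1)), W.A, W.B, W.X, hconv_tnorm⟩
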